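/- arXiv:math/0606626 — 2 statements merged into one kernel-verified Lean document; each statement's English description precedes it below -/
import Mathlib

section
/- Let (X, μ) be a measure space, let m₀ ≥ 1 and m ≥ m₀ be natural numbers, let K : ℕ → X → [0, ∞] be a sequence of measurable functions such that each K_k is almost everywhere positive and almost everywhere finite, and let c : ℕ → [0, ∞]. Suppose that for every k with m₀ < k ≤ m one has ∫ (K_k / K_{k-1}) dμ = c_k. Then ∫ K_m^{1/m} dμ ≤ (∏_{k=m₀+1}^{m} c_k)^{1/m} · (∫ K_{m₀}^{1/m₀} dμ)^{m₀/m}. -/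
open MeasureTheory
open scoped ENNReal

/-- Hölder's inequality with exponents `k + 1` and `(k + 1) / k`, applied to
`g ^ (1 / (k + 1)) = (g / f) ^ (1 / (k + 1)) * f ^ (1 / (k + 1))`. -/
theorem lintegral_rpow_one_div_succ_le {X : Type*} [MeasurableSpace X] {μ : Measure X}
    {k : ℕ} (hk : 1 ≤ k) {f g : X → ℝ≥0∞} (hf : AEMeasurable f μ) (hg : AEMeasurable g μ)
    (hf_pos : ∀ᵐ x ∂μ, 0 < f x) (hf_fin : ∀ᵐ x ∂μ, f x < ⊤) :
    ∫⁻ x, g x ^ ((1 : ℝ) / (k + 1 : ℕ)) ∂μ ≤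
      (∫⁻ x, g x / f x ∂μ) ^ ((1 : ℝ) / (k + 1 : ℕ)) *
        (∫⁻ x, f x ^ ((1 : ℝ) / k) ∂μ) ^ ((k : ℝ) / (k + 1 : ℕ)) := by
  have hk_ne : (k : ℝ) ≠ 0 := by positivity
  have hsucc_ne : ((k + 1 : ℕ) : ℝ) ≠ 0 := by positivity
  have hsum : (1 : ℝ) / (k + 1 : ℕ) + (k : ℝ) / (k + 1 : ℕ) = 1 := by
    rw [← add_div, div_eq_one_iff_eq hsucc_ne]
    push_cast
    ring
  refine le_trans (le_of_eq (lintegral_congr_ae ?_))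
    (ENNReal.lintegral_mul_norm_pow_le (hg.div hf) (hf.pow_const _)
      (by positivity) (by positivity) hsum)
  filter_upwards [hf_pos, hf_fin] with x hpos hfin
  rw [← ENNReal.rpow_mul, one_div_mul_eq_div, div_div_cancel_left' hk_ne, ← one_div,
    Pi.div_apply, ← ENNReal.mul_rpow_of_nonneg _ _ (by positivity),
    ENNReal.div_mul_cancel hpos.ne' hfin.ne]

/-- Measure-theoretic content of Lemma 4.2 of Tsuji's "Dynamical construction of
Kähler-Einstein metrics": iterating Hölder's inequality along the dynamical system of
Bergman kernels gives
`∫ K_m^(1/m) ≤ (∏_{k=m₀+1}^m c_k)^(1/m) · (∫ K_{m₀}^(1/m₀))^(m₀/m)`. -/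
theorem stmt_1 {X : Type*} [MeasurableSpace X] (μ : Measure X) (m₀ m : ℕ)
    (hm₀ : 1 ≤ m₀) (hm : m₀ ≤ m) (K : ℕ → X → ℝ≥0∞) (c : ℕ → ℝ≥0∞)
    (hK_meas : ∀ k, Measurable (K k))
    (hK_pos : ∀ k, ∀ᵐ x ∂μ, 0 < K k x)
    (hK_fin : ∀ k, ∀ᵐ x ∂μ, K k x < ⊤)
    (hc : ∀ k, m₀ < k → k ≤ m → ∫⁻ x, K k x / K (k - 1) x ∂μ = c k) :
    ∫⁻ x, (K m x) ^ ((1 : ℝ) / m) ∂μ ≤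
      (∏ k ∈ Finset.Icc (m₀ + 1) m, c k) ^ ((1 : ℝ) / m) *
        (∫⁻ x, (K m₀ x) ^ ((1 : ℝ) / m₀) ∂μ) ^ ((m₀ : ℝ) / m) := by
  induction m, hm using Nat.le_induction with
  | base =>
    have hm₀_ne : (m₀ : ℝ) ≠ 0 := by positivity
    simp [div_self hm₀_ne]
  | succ k hk ih =>
    have hk_one : 1 ≤ k := hm₀.trans hk
    have hk_ne : (k : ℝ) ≠ 0 := by positivity
    refine (lintegral_rpow_one_div_succ_le hk_one (hK_meas k).aemeasurable
      (hK_meas (k + 1)).aemeasurable (hK_pos k) (hK_fin k)).trans ?_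
    have hc_succ := hc (k + 1) (by omega) le_rfl
    rw [Nat.add_sub_cancel] at hc_succ
    rw [hc_succ, Finset.prod_Icc_succ_top (by omega),
      ENNReal.mul_rpow_of_nonneg _ _ (by positivity), mul_comm (_ ^ _) (c (k + 1) ^ _), mul_assoc]
    gcongr
    refine (ENNReal.rpow_le_rpow (ih fun j hj hjk => hc j hj (by omega))
      (by positivity)).trans_eq ?_
    rw [ENNReal.mul_rpow_of_nonneg _ _ (by positivity), ← ENNReal.rpow_mul, ← ENNReal.rpow_mul,
      div_mul_div_cancel₀ hk_ne, div_mul_div_cancel₀ hk_ne]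
end

section
/- Let (X, μ) be a measure space, let n and m₀ ≥ 1 be natural numbers, let K : ℕ → X → [0, ∞] be a sequence of measurable functions such that each K_k is almost everywhere positive and almost everywhere finite, and let c : ℕ → ℝ with c_k > 0. Suppose: (i) for every k > m₀ one has ∫ (K_k / K_{k-1}) dμ = c_k; (ii) ∫ K_{m₀}^{1/m₀} dμ < ∞; and (iii) c_k / k^n converges to a real number V > 0 as k → ∞. Then limsup_{m → ∞} (m!)^{-n/m} · ∫ K_m^{1/m} dμ ≤ V. -/
open MeasureTheory Filter
open scoped ENNReal

/-- Root test: a sequence with a finite starting value whose successive ratios are eventually at most `W`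
has `m`-th roots with upper limit at most `W`. -/
theorem ENNReal.limsup_rpow_inv_le_of_succ_le_mul {a : ℕ → ℝ≥0∞} {W : ℝ≥0∞} (hW₀ : W ≠ 0)
    (hW : W ≠ ⊤) (N : ℕ) (haN : a N ≠ ⊤) (ha : ∀ m, N ≤ m → a (m + 1) ≤ W * a m) :
    limsup (fun m : ℕ => a m ^ ((1 : ℝ) / m)) atTop ≤ W := by
  set D : ℝ≥0∞ := max (a N / W ^ N) 1
  have hD₀ : D ≠ 0 := (zero_lt_one.trans_le (le_max_right _ _)).ne'
  have hDtop : D ≠ ⊤ :=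
    (max_lt (ENNReal.div_lt_top haN (pow_ne_zero _ hW₀)) ENNReal.one_lt_top).ne
  have hbound : ∀ m, N ≤ m → a m ≤ D * W ^ m := by
    intro m hm
    induction m, hm using Nat.le_induction with
    | base =>
      rw [← ENNReal.div_le_iff (pow_ne_zero _ hW₀) (ENNReal.pow_ne_top hW)]
      exact le_max_left _ _
    | succ m hm ih =>
      calc a (m + 1) ≤ W * a m := ha m hm
        _ ≤ W * (D * W ^ m) := by gcongr
        _ = D * W ^ (m + 1) := by ring
  have hroot : ∀ᶠ m : ℕ in atTop, a m ^ ((1 : ℝ) / m) ≤ D ^ ((1 : ℝ) / m) * W := by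
    filter_upwards [eventually_ge_atTop N, eventually_ge_atTop 1] with m hm hm1
    have hm' : (m : ℝ) ≠ 0 := by positivity
    calc a m ^ ((1 : ℝ) / m) ≤ (D * W ^ m) ^ ((1 : ℝ) / m) := by
          gcongr
          exact hbound m hm
      _ = D ^ ((1 : ℝ) / m) * W := by
          rw [ENNReal.mul_rpow_of_nonneg _ _ (by positivity), ← ENNReal.rpow_natCast,
            ← ENNReal.rpow_mul, mul_one_div_cancel hm', ENNReal.rpow_one]
  have hlim : Tendsto (fun m : ℕ => D ^ ((1 : ℝ) / m) * W) atTop (nhds W) := by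
    clear_value D
    lift D to NNReal using hDtop
    have hpow : Tendsto (fun m : ℕ => D ^ ((1 : ℝ) / m)) atTop (nhds 1) := by
      have := (NNReal.continuousAt_rpow (x := D) (y := 0)
        (Or.inl (by simpa using hD₀))).tendsto.comp
          (tendsto_const_nhds.prodMk_nhds tendsto_one_div_atTop_nhds_zero_nat)
      simpa [Function.comp_def] using this
    have hpow' : Tendsto (fun m : ℕ => (D : ℝ≥0∞) ^ ((1 : ℝ) / m)) atTop (nhds 1) := by
      refine (ENNReal.tendsto_coe.2 hpow).congr fun m => ?_
      exact ENNReal.coe_rpow_of_nonneg _ (one_div_nonneg.2 m.cast_nonneg)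
    simpa using ENNReal.Tendsto.mul_const hpow' (Or.inr hW)
  exact (limsup_le_limsup hroot).trans hlim.limsup_eq.le

/-- Hölder's inequality comparing the integrals of the `(m + 1)`-st root of `g` and the `m`-th root
of `f`. -/
theorem lintegral_rpow_inv_succ_pow_le {X : Type*} [MeasurableSpace X] {μ : Measure X}
    {f g : X → ℝ≥0∞} (hf : Measurable f) (hg : Measurable g) (hf₀ : ∀ᵐ x ∂μ, 0 < f x)
    (hftop : ∀ᵐ x ∂μ, f x < ⊤) {m : ℕ} (hm : 1 ≤ m) :
    (∫⁻ x, g x ^ ((1 : ℝ) / (m + 1 : ℕ)) ∂μ) ^ (m + 1) ≤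
      (∫⁻ x, g x / f x ∂μ) * (∫⁻ x, f x ^ ((1 : ℝ) / m) ∂μ) ^ m := by
  have hm' : (m : ℝ) ≠ 0 := by positivity
  have hm1 : ((m + 1 : ℕ) : ℝ) ≠ 0 := by positivity
  have hsplit : ∫⁻ x, g x ^ ((1 : ℝ) / (m + 1 : ℕ)) ∂μ =
      ∫⁻ x, (g x / f x) ^ ((1 : ℝ) / (m + 1 : ℕ)) *
        (f x ^ ((1 : ℝ) / m)) ^ ((m : ℝ) / (m + 1 : ℕ)) ∂μ := by
    refine lintegral_congr_ae ?_
    filter_upwards [hf₀, hftop] with x hx₀ hxtop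
    rw [← ENNReal.rpow_mul, one_div_mul_eq_div, div_div_cancel_left' hm', ← one_div,
      ← ENNReal.mul_rpow_of_nonneg _ _ (by positivity),
      ENNReal.div_mul_cancel hx₀.ne' hxtop.ne]
  have hholder := ENNReal.lintegral_mul_norm_pow_le (μ := μ) (hg.div hf).aemeasurable
    (hf.pow_const ((1 : ℝ) / m)).aemeasurable
    (p := (1 : ℝ) / (m + 1 : ℕ)) (q := (m : ℝ) / (m + 1 : ℕ)) (by positivity) (by positivity)
    (by rw [← add_div, div_eq_one_iff_eq hm1]; push_cast; ring)
  rw [hsplit]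
  refine (pow_le_pow_left' hholder (m + 1)).trans_eq ?_
  rw [mul_pow, ← ENNReal.rpow_mul_natCast, ← ENNReal.rpow_mul_natCast,
    div_mul_cancel₀ _ hm1, div_mul_cancel₀ _ hm1, ENNReal.rpow_one, ENNReal.rpow_natCast]
  simp only [Pi.div_apply]

/-- Abstract form of Lemma 4.4 of Tsuji's "Dynamical construction of Kähler-Einstein
metrics": if `∫ K_k/K_{k-1} = c_k` for `k > m₀`, `∫ K_{m₀}^(1/m₀) < ∞`, and
`c_k / k^n → V > 0`, then `limsup_m (m!)^(-n/m) · ∫ K_m^(1/m) ≤ V`. -/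
theorem stmt_4 {X : Type*} [MeasurableSpace X] (μ : Measure X) (n m₀ : ℕ) (hm₀ : 1 ≤ m₀)
    (K : ℕ → X → ℝ≥0∞) (c : ℕ → ℝ) (V : ℝ) (hV : 0 < V)
    (hK_meas : ∀ k, Measurable (K k))
    (hK_pos : ∀ k, ∀ᵐ x ∂μ, 0 < K k x)
    (hK_fin : ∀ k, ∀ᵐ x ∂μ, K k x < ⊤)
    (hc_pos : ∀ k, 0 < c k)
    (hc : ∀ k, m₀ < k → ∫⁻ x, K k x / K (k - 1) x ∂μ = ENNReal.ofReal (c k))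
    (hK₀ : ∫⁻ x, (K m₀ x) ^ ((1 : ℝ) / m₀) ∂μ < ⊤)
    (hc_lim : Tendsto (fun k : ℕ => c k / (k : ℝ) ^ n) atTop (nhds V)) :
    limsup
      (fun m : ℕ =>
        (m.factorial : ℝ≥0∞) ^ (-(n : ℝ) / m) * ∫⁻ x, (K m x) ^ ((1 : ℝ) / m) ∂μ)
      atTop ≤ ENNReal.ofReal V := by
  set I : ℕ → ℝ≥0∞ := fun m => ∫⁻ x, (K m x) ^ ((1 : ℝ) / m) ∂μ
  have hstep : ∀ m, m₀ ≤ m → I (m + 1) ^ (m + 1) ≤ ENNReal.ofReal (c (m + 1)) * I m ^ m := by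
    intro m hm
    have h := lintegral_rpow_inv_succ_pow_le (hK_meas m) (hK_meas (m + 1)) (hK_pos m) (hK_fin m)
      (hm₀.trans hm)
    have hcm := hc (m + 1) (by lia)
    rw [Nat.add_sub_cancel] at hcm
    rwa [hcm] at h
  have hfin : ∀ m, m₀ ≤ m → I m ^ m ≠ ⊤ := by
    intro m hm
    induction m, hm using Nat.le_induction with
    | base => exact ENNReal.pow_ne_top hK₀.ne
    | succ m hm ih =>
      exact ne_top_of_le_ne_top (ENNReal.mul_ne_top ENNReal.ofReal_ne_top ih) (hstep m hm)
  set a : ℕ → ℝ≥0∞ := fun m => I m ^ m / (m.factorial : ℝ≥0∞) ^ n with ha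
  have hfact : ∀ m : ℕ, (m.factorial : ℝ≥0∞) ^ n ≠ 0 := fun m =>
    pow_ne_zero _ (by exact_mod_cast m.factorial_ne_zero)
  have hroot : (fun m : ℕ => (m.factorial : ℝ≥0∞) ^ (-(n : ℝ) / m) * I m) =ᶠ[atTop]
      fun m => a m ^ ((1 : ℝ) / m) := by
    filter_upwards [eventually_ge_atTop 1] with m hm
    have hm' : (m : ℝ) ≠ 0 := by positivity
    simp only [ha]
    rw [div_eq_mul_inv (I m ^ m), ENNReal.mul_rpow_of_nonneg _ _ (by positivity), ← ENNReal.rpow_natCast,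
      ← ENNReal.rpow_mul, mul_one_div_cancel hm', ENNReal.rpow_one, ← ENNReal.rpow_natCast,
      ← ENNReal.rpow_neg, ← ENNReal.rpow_mul, mul_one_div, mul_comm]
  rw [limsup_congr hroot]
  refine le_of_forall_gt_imp_ge_of_dense fun W hVW => ?_
  rcases eq_or_ne W ⊤ with rfl | hW
  · exact le_top
  have hlim := ENNReal.tendsto_ofReal hc_lim
  obtain ⟨N, hN⟩ := eventually_atTop.1 (hlim.eventually (gt_mem_nhds hVW))
  refine ENNReal.limsup_rpow_inv_le_of_succ_le_mul (ne_bot_of_gt hVW) hW (max N m₀)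
    (ENNReal.div_ne_top (hfin _ (le_max_right _ _)) (hfact _)) fun m hm => ?_
  have hratio : ENNReal.ofReal (c (m + 1)) ≤ W * ((m + 1 : ℕ) : ℝ≥0∞) ^ n := by
    have hpos : (0 : ℝ) < ((m + 1 : ℕ) : ℝ) ^ n := by positivity
    have h := (hN (m + 1) (by lia)).le
    rw [ENNReal.ofReal_div_of_pos hpos, ENNReal.ofReal_pow (by positivity),
      ENNReal.ofReal_natCast] at h
    exact (ENNReal.div_le_iff (pow_ne_zero _ (by simp))
      (ENNReal.pow_ne_top (ENNReal.natCast_ne_top _))).1 h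
  simp only [ha]
  rw [ENNReal.div_le_iff (hfact _) (ENNReal.pow_ne_top (ENNReal.natCast_ne_top _))]
  calc I (m + 1) ^ (m + 1) ≤ ENNReal.ofReal (c (m + 1)) * I m ^ m := hstep m (by lia)
    _ ≤ W * ((m + 1 : ℕ) : ℝ≥0∞) ^ n * I m ^ m := by gcongr
    _ = W * ((m + 1 : ℕ) : ℝ≥0∞) ^ n *
        (I m ^ m / (m.factorial : ℝ≥0∞) ^ n * (m.factorial : ℝ≥0∞) ^ n) := by
      rw [ENNReal.div_mul_cancel (hfact m) (ENNReal.pow_ne_top (ENNReal.natCast_ne_top _))]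
    _ = W * (I m ^ m / (m.factorial : ℝ≥0∞) ^ n) * ((m + 1).factorial : ℝ≥0∞) ^ n := by
      rw [Nat.factorial_succ, Nat.cast_mul, mul_pow]
      ring
end
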